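/- Let α > -1, s ∈ ℕ, 0 ≤ k ≤ s-1, 1 ≤ q ≤ ∞, and let p be the conjugate exponent of q (1/p + 1/q = 1). Suppose either (a) β = 0, or (b) s = 1 and β < p/2 - 1 if 1 ≤ q < ∞, β ≤ -1/2 if q = ∞. Then there is a constant c > 0 such that for every g ∈ L^q(w_{α,β}), ‖φ^{s-k} · u_{g,k}^{(2s-k)}‖_{L^q(w_{α,β})} ≤ c ‖g‖_{L^q(w_{α,β})}, where φ(x) = √(1-x²) and u_{g,k}^{(2s-k)} is the (2s-k)-th derivative of u_{g,k} (defined almost everywhere). -/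

import Mathlib

open MeasureTheory Set ENNReal NNReal
noncomputable section
namespace JacobiApprox

/-- The Jacobi weight `w_{α,β}(x) = (1-x)^α (1+x)^β` on `(-1,1)`. -/
def w (α β x : ℝ) : ℝ := (1 - x) ^ α * (1 + x) ^ β

/-- The weighted `L^p` norm `‖f‖_{L^p(w_{α,β})}`; for `p = ∞` it is the uniform
norm on `[-1,1]`. -/
def LpW (α β : ℝ) (p : ℝ≥0∞) (f : ℝ → ℝ) : ℝ :=
  if p = ⊤ then sSup ((fun x => |f x|) '' Icc (-1 : ℝ) 1)
  else (∫ x in Ioo (-1 : ℝ) 1, |f x| ^ p.toReal * w α β x) ^ (1 / p.toReal)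

/-- Membership in `L^p(w_{α,β})` (`f ∈ C[-1,1]` when `p = ∞`). -/
def MemLpW (α β : ℝ) (p : ℝ≥0∞) (f : ℝ → ℝ) : Prop :=
  Measurable f ∧
    (p ≠ ⊤ → IntegrableOn (fun x => |f x| ^ p.toReal * w α β x) (Ioo (-1 : ℝ) 1)) ∧
    (p = ⊤ → ContinuousOn f (Icc (-1 : ℝ) 1))

/-- `E_n(f)_{L^p(w_{α,β})}`: the error of best approximation of `f` by polynomials
of degree at most `n` in `L^p(w_{α,β})`. -/
def E (α β : ℝ) (p : ℝ≥0∞) (n : ℕ) (f : ℝ → ℝ) : ℝ :=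
  sInf {r : ℝ | ∃ q : Polynomial ℝ, q.natDegree ≤ n ∧
    r = LpW α β p (fun x => f x - q.eval x)}

/-- Membership in the Sobolev space `W_p^s(w_{α,β})`: `f` has `s` continuous
derivatives and `f^{(s)} ∈ L^p(w_{α,β})` (for `p = ∞` this is `f ∈ C^s[-1,1]`). -/
def MemW (α β : ℝ) (p : ℝ≥0∞) (s : ℕ) (f : ℝ → ℝ) : Prop :=
  ContDiff ℝ (s : ℕ∞) f ∧
    (p ≠ ⊤ → IntegrableOn (fun x => |iteratedDeriv s f x| ^ p.toReal * w α β x)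
      (Ioo (-1 : ℝ) 1))

/-- The Sobolev norm `‖f‖_{W_p^s(w_{α,β})}` (max over derivatives when `p = ∞`). -/
def WNorm (α β : ℝ) (p : ℝ≥0∞) (s : ℕ) (f : ℝ → ℝ) : ℝ :=
  if p = ⊤ then
    (Finset.range (s + 1)).sup' (Finset.nonempty_range_iff.mpr (Nat.succ_ne_zero s))
      (fun k => LpW α β ⊤ (iteratedDeriv k f))
  else (∑ k ∈ Finset.range (s + 1), (LpW α β p (iteratedDeriv k f)) ^ p.toReal) ^
    (1 / p.toReal)

/-- Pochhammer symbol (rising factorial) `(a)_k`. -/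
def poch (a : ℝ) (k : ℕ) : ℝ := ∏ i ∈ Finset.range k, (a + i)

/-- The Jacobi polynomial `P_n^{(α,β)}`. -/
def JP (α β : ℝ) (n : ℕ) (t : ℝ) : ℝ :=
  (poch (α + 1) n / n.factorial) *
    ∑ k ∈ Finset.range (n + 1),
      poch (-(n : ℝ)) k * poch ((n : ℝ) + α + β + 1) k /
        (poch (α + 1) k * k.factorial) * ((1 - t) / 2) ^ k

/-- The renormalized Jacobi polynomial `J_n^{α,β} = 2^n/(n+α+β+1)_n · P_n^{(α,β)}`. -/
def J (α β : ℝ) (n : ℕ) (t : ℝ) : ℝ :=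
  2 ^ n / poch ((n : ℝ) + α + β + 1) n * JP α β n t

/-- The inner product `⟨f,g⟩_{α,β} = ∫_{-1}^1 f g w_{α,β}`. -/
def ip (α β : ℝ) (f g : ℝ → ℝ) : ℝ := ∫ x in Ioo (-1 : ℝ) 1, f x * g x * w α β x

/-- `h_n^{α,β} = ⟨J_n^{α,β}, J_n^{α,β}⟩_{α,β}`. -/
def hJ (α β : ℝ) (n : ℕ) : ℝ := ip α β (J α β n) (J α β n)

/-- The Fourier–Jacobi coefficient `\hat f_n^{α,β}`. -/
def coeff (α β : ℝ) (n : ℕ) (f : ℝ → ℝ) : ℝ := ip α β f (J α β n) / hJ α β n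

/-- The `n`-th partial sum `S_n^{α,β} f` of the Fourier–Jacobi series. -/
def S (α β : ℝ) (n : ℕ) (f : ℝ → ℝ) (x : ℝ) : ℝ :=
  ∑ k ∈ Finset.range (n + 1), coeff α β k f * J α β k x

/-- An admissible cut-off function: `C^∞`, `η ≡ 1` on `[0,1]`, `η ≡ 0` on `[2,∞)`. -/
def Admissible (η : ℝ → ℝ) : Prop :=
  ContDiff ℝ (⊤ : ℕ∞) η ∧ (∀ t : ℝ, 0 ≤ t → t ≤ 1 → η t = 1) ∧ ∀ t : ℝ, 2 ≤ t → η t = 0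

/-- The de la Vallée Poussin type operator `V_n^{α,β} f`. -/
def V (η : ℝ → ℝ) (α β : ℝ) (n : ℕ) (f : ℝ → ℝ) (x : ℝ) : ℝ :=
  ∑ k ∈ Finset.range (2 * n + 1), η ((k : ℝ) / (n : ℝ)) * coeff α β k f * J α β k x

/-- The Sobolev orthogonal polynomial `𝒥_{n,θ}^{α-s,β-s}`. -/
def SJ (α β : ℝ) (s : ℕ) (θ : ℝ) (n : ℕ) (x : ℝ) : ℝ :=
  if n < s then (x - θ) ^ n / n.factorial
  else ∫ t in θ..x, (x - t) ^ (s - 1) / (s - 1).factorial * J α β (n - s) t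

/-- The Sobolev inner product `⟨f,g⟩_{α,β}^{-s}`. -/
def ipS (α β : ℝ) (s : ℕ) (θ : ℝ) (lam : ℕ → ℝ) (f g : ℝ → ℝ) : ℝ :=
  ip α β (iteratedDeriv s f) (iteratedDeriv s g) +
    ∑ k ∈ Finset.range s, lam k * iteratedDeriv k f θ * iteratedDeriv k g θ

/-- The Fourier coefficient `\hat{𝔣}_n^{α-s,β-s}` in the Sobolev orthogonal system. -/
def coeffS (α β : ℝ) (s : ℕ) (θ : ℝ) (lam : ℕ → ℝ) (n : ℕ) (f : ℝ → ℝ) : ℝ :=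
  ipS α β s θ lam f (SJ α β s θ n) / ipS α β s θ lam (SJ α β s θ n) (SJ α β s θ n)

/-- The `n`-th partial sum `𝒮_{n,θ}^{α-s,β-s} f` of the Sobolev orthogonal expansion. -/
def SS (α β : ℝ) (s : ℕ) (θ : ℝ) (lam : ℕ → ℝ) (n : ℕ) (f : ℝ → ℝ) (x : ℝ) : ℝ :=
  ∑ k ∈ Finset.range (n + 1), coeffS α β s θ lam k f * SJ α β s θ k x

/-- The operator `𝒱_{n,θ}^{α-s,β-s} f`. -/
def VS (η : ℝ → ℝ) (α β : ℝ) (s : ℕ) (θ : ℝ) (n : ℕ) (f : ℝ → ℝ) (x : ℝ) : ℝ :=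
  (∑ k ∈ Finset.range s, iteratedDeriv k f θ * (x - θ) ^ k / k.factorial) +
    ∫ t in θ..x, (x - t) ^ (s - 1) / (s - 1).factorial *
      V η α β n (iteratedDeriv s f) t

/-- `A_j^{α,β} = (α+β+2)_{2j}/(α+1)_j`. -/
def Acoef (α β : ℝ) (j : ℕ) : ℝ := poch (α + β + 2) (2 * j) / poch (α + 1) j

/-- `B_n^{α,β} = (α+1)_{n+1}/(α+β+2)_{2n+1}`. -/
def Bcoef (α β : ℝ) (n : ℕ) : ℝ := poch (α + 1) (n + 1) / poch (α + β + 2) (2 * n + 1)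

/-- `D_j^{α,β} = (j+β+1)/((2j+α+β+2)(2j+α+β+3))`. -/
def Dcoef (α β : ℝ) (j : ℕ) : ℝ :=
  ((j : ℝ) + β + 1) / ((2 * (j : ℝ) + α + β + 2) * (2 * (j : ℝ) + α + β + 3))

/-- The function `u_{g,k}` of the Aubin–Nitsche duality argument. -/
def u (α β : ℝ) (s k : ℕ) (g : ℝ → ℝ) (x : ℝ) : ℝ :=
  ∫ t in (-1 : ℝ)..x, (x - t) ^ (s - 1) / (s - 1).factorial * (1 / w α β t) *
    ∫ y in t..(1 : ℝ), (y - t) ^ (s - k - 1) / (s - k - 1).factorial * g y * w α β y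

/-- The `s`-th derivative of `u_{g,k}`, given by its explicit formula. -/
def uDs (α β : ℝ) (s k : ℕ) (g : ℝ → ℝ) (x : ℝ) : ℝ :=
  (1 / w α β x) *
    ∫ y in x..(1 : ℝ), (y - x) ^ (s - k - 1) / (s - k - 1).factorial * g y * w α β y



/-- repeated integral with base point `a` -/
def RI (a : ℝ) (n : ℕ) (f : ℝ → ℝ) (x : ℝ) : ℝ :=
  ∫ t in a..x, (x - t) ^ n / (n.factorial : ℝ) * f t

lemma RI_zero (a : ℝ) (f : ℝ → ℝ) : RI a 0 f = fun x => ∫ t in a..x, f t := by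
  funext x; simp [RI]

lemma RI_succ {a x : ℝ} (n : ℕ) {f : ℝ → ℝ} (hf : IntervalIntegrable f volume a x) :
    RI a (n + 1) f x = RI a n (RI a 0 f) x := by
  have hF : AbsolutelyContinuousOnInterval (RI a 0 f) a x := by
    rw [RI_zero]
    exact hf.absolutelyContinuousOnInterval_intervalIntegral left_mem_uIcc
  have hp : AbsolutelyContinuousOnInterval
      (fun t => (x - t) ^ (n + 1) / ((n + 1).factorial : ℝ)) a x := by
    apply ContDiffOn.absolutelyContinuousOnInterval
    fun_prop
  have key := hp.integral_mul_deriv_eq_deriv_mul hF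
  have h1 : ∫ t in a..x, (x - t) ^ (n + 1) / ((n + 1).factorial : ℝ) * deriv (RI a 0 f) t
      = RI a (n + 1) f x := by
    rw [RI]
    apply intervalIntegral.integral_congr_ae
    filter_upwards [hf.ae_hasDerivAt_integral] with t ht ht'
    rw [RI_zero, (ht (uIoc_subset_uIcc ht') a left_mem_uIcc).deriv]
  have h2 : ∀ t, deriv (fun t => (x - t) ^ (n + 1) / ((n + 1).factorial : ℝ)) t
      = -((x - t) ^ n / (n.factorial : ℝ)) := by
    intro t
    have : HasDerivAt (fun t => (x - t) ^ (n + 1) / ((n + 1).factorial : ℝ))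
        ((((n + 1 : ℕ) : ℝ) * (x - t) ^ n * (-1)) / ((n + 1).factorial : ℝ)) t := by
      have := (((hasDerivAt_id t).const_sub x).pow (n + 1)).div_const ((n + 1).factorial : ℝ)
      simpa using this
    rw [this.deriv, Nat.factorial_succ]
    have : (n.factorial : ℝ) ≠ 0 := by positivity
    push_cast
    field_simp
  rw [h1] at key
  rw [key]
  simp only [h2, sub_self]
  have h0 : RI a 0 f a = 0 := by simp [RI_zero]
  rw [h0]
  simp [RI]

lemma RI_aux {a : ℝ} {U : Set ℝ}
    (hU : ∀ x ∈ U, ∃ x' ∈ U, uIcc a x' ∈ nhds x) {f : ℝ → ℝ}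
    (hf : ∀ x ∈ U, IntervalIntegrable f volume a x) :
    ContinuousOn (RI a 0 f) U ∧ ∀ x ∈ U, IntervalIntegrable (RI a 0 f) volume a x := by
  have h : ∀ x ∈ U, ContinuousOn (RI a 0 f) (uIcc a x) := by
    intro x hx
    rw [RI_zero]
    exact intervalIntegral.continuousOn_primitive_interval' (hf x hx) left_mem_uIcc
  refine ⟨fun x hx => ?_, fun x hx => (h x hx).intervalIntegrable⟩
  obtain ⟨x', hx', hn⟩ := hU x hx
  exact ((h x' hx').continuousAt hn).continuousWithinAt

lemma RI_hasDerivAt_zero {a : ℝ} {U : Set ℝ} (hUo : IsOpen U) {f : ℝ → ℝ}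
    (hf : ∀ x ∈ U, IntervalIntegrable f volume a x) (hc : ContinuousOn f U) :
    ∀ x ∈ U, HasDerivAt (RI a 0 f) (f x) x := by
  intro x hx
  rw [RI_zero]
  exact intervalIntegral.integral_hasDerivAt_right (hf x hx)
    (hc.stronglyMeasurableAtFilter hUo x hx) (hc.continuousAt (hUo.mem_nhds hx))

lemma RI_hasDerivAt_succ {a : ℝ} {U : Set ℝ} (hUo : IsOpen U)
    (hU : ∀ x ∈ U, ∃ x' ∈ U, uIcc a x' ∈ nhds x) (n : ℕ) : ∀ {f : ℝ → ℝ}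
    (_ : ∀ x ∈ U, IntervalIntegrable f volume a x),
    ∀ x ∈ U, HasDerivAt (RI a (n + 1) f) (RI a n f x) x := by
  induction n with
  | zero =>
    intro f hf x hx
    obtain ⟨h1, h2⟩ := RI_aux hU hf
    refine (RI_hasDerivAt_zero hUo h2 h1 x hx).congr_of_eventuallyEq ?_
    filter_upwards [hUo.mem_nhds hx] with y hy using RI_succ 0 (hf y hy)
  | succ n ih =>
    intro f hf x hx
    obtain ⟨h1, h2⟩ := RI_aux hU hf
    rw [RI_succ n (hf x hx)]
    refine (ih h2 x hx).congr_of_eventuallyEq ?_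
    filter_upwards [hUo.mem_nhds hx] with y hy using RI_succ (n + 1) (hf y hy)

lemma iteratedDeriv_add_comp (m n : ℕ) (f : ℝ → ℝ) :
    iteratedDeriv (m + n) f = iteratedDeriv m (iteratedDeriv n f) := by
  simp only [iteratedDeriv_eq_iterate, Function.iterate_add_apply]

lemma iteratedDeriv_congr_open {U : Set ℝ} (hUo : IsOpen U) (n : ℕ) {f g : ℝ → ℝ}
    (h : ∀ x ∈ U, f x = g x) : ∀ x ∈ U, iteratedDeriv n f x = iteratedDeriv n g x := by
  induction n with
  | zero => simpa using h
  | succ n ih =>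
    intro x hx
    rw [iteratedDeriv_succ, iteratedDeriv_succ]
    apply Filter.EventuallyEq.deriv_eq
    filter_upwards [hUo.mem_nhds hx] with y hy using ih y hy

lemma RI_iteratedDeriv {a : ℝ} {U : Set ℝ} (hUo : IsOpen U)
    (hU : ∀ x ∈ U, ∃ x' ∈ U, uIcc a x' ∈ nhds x) (n : ℕ) {f : ℝ → ℝ}
    (hf : ∀ x ∈ U, IntervalIntegrable f volume a x) (hc : ContinuousOn f U) :
    ∀ x ∈ U, iteratedDeriv (n + 1) (RI a n f) x = f x := by
  induction n with
  | zero =>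
    intro x hx
    rw [iteratedDeriv_one]
    exact (RI_hasDerivAt_zero hUo hf hc x hx).deriv
  | succ n ih =>
    intro x hx
    rw [iteratedDeriv_succ']
    rw [iteratedDeriv_congr_open hUo (n + 1) (g := RI a n f) _ x hx]
    · exact ih x hx
    · intro y hy
      exact (RI_hasDerivAt_succ hUo hU n hf y hy).deriv

lemma hU_left : ∀ x ∈ Ioo (-1 : ℝ) 1, ∃ x' ∈ Ioo (-1 : ℝ) 1, uIcc (-1) x' ∈ nhds x := by
  intro x hx
  refine ⟨(x + 1) / 2, ⟨by linarith [hx.1], by linarith [hx.2]⟩, ?_⟩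
  rw [uIcc_of_le (by linarith [hx.1])]
  exact Icc_mem_nhds hx.1 (by linarith [hx.2])

lemma hU_right : ∀ x ∈ Ioo (-1 : ℝ) 1, ∃ x' ∈ Ioo (-1 : ℝ) 1, uIcc 1 x' ∈ nhds x := by
  intro x hx
  refine ⟨(x - 1) / 2, ⟨by linarith [hx.1], by linarith [hx.2]⟩, ?_⟩
  rw [uIcc_of_ge (by linarith [hx.2])]
  exact Icc_mem_nhds (by linarith [hx.1]) hx.2

/-- right-sided repeated integral -/
def GG (n : ℕ) (f : ℝ → ℝ) (x : ℝ) : ℝ :=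
  ∫ y in x..(1 : ℝ), (y - x) ^ n / (n.factorial : ℝ) * f y

lemma GG_eq (n : ℕ) (f : ℝ → ℝ) (x : ℝ) : GG n f x = (-1) ^ (n + 1) * RI 1 n f x := by
  rw [GG, RI, intervalIntegral.integral_symm, ← intervalIntegral.integral_const_mul,
    ← intervalIntegral.integral_neg]
  congr 1
  funext y
  have : (y - x) ^ n = (-1) ^ n * (x - y) ^ n := by rw [← mul_pow]; ring
  rw [this]; ring

lemma int_right {f : ℝ → ℝ} (hf : IntervalIntegrable f volume (-1) 1) {x : ℝ}
    (hx : x ∈ Ioo (-1 : ℝ) 1) : IntervalIntegrable f volume x 1 := by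
  apply hf.mono_set
  rw [uIcc_of_le hx.2.le, uIcc_of_le (by norm_num)]
  exact Icc_subset_Icc hx.1.le le_rfl

lemma GG_hasDerivAt {f : ℝ → ℝ} (hf : IntervalIntegrable f volume (-1) 1) (n : ℕ) :
    ∀ x ∈ Ioo (-1 : ℝ) 1, HasDerivAt (GG (n + 1) f) (-(GG n f x)) x := by
  intro x hx
  have h := (RI_hasDerivAt_succ isOpen_Ioo hU_right n
    (fun x hx => (int_right hf hx).symm) x hx).const_mul ((-1 : ℝ) ^ (n + 1 + 1))
  have e : GG (n + 1) f = fun x => (-1) ^ (n + 1 + 1) * RI 1 (n + 1) f x :=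
    funext (GG_eq (n + 1) f)
  have e2 : -(GG n f x) = (-1) ^ (n + 1 + 1) * RI 1 n f x := by rw [GG_eq]; ring
  rw [e, e2]
  exact h

lemma GG_continuousOn {f : ℝ → ℝ} (hf : IntervalIntegrable f volume (-1) 1) (n : ℕ) :
    ContinuousOn (GG n f) (Ioo (-1 : ℝ) 1) := by
  cases n with
  | zero =>
    have e : GG 0 f = fun x => (-1) ^ (0 + 1) * RI 1 0 f x := funext (GG_eq 0 f)
    rw [e]
    exact ((RI_aux hU_right (fun x hx => (int_right hf hx).symm)).1).const_mul _
  | succ n => exact fun x hx => (GG_hasDerivAt hf n x hx).continuousAt.continuousWithinAt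

lemma GG_bound {f : ℝ → ℝ} (hf : IntervalIntegrable f volume (-1) 1) (n : ℕ) {x : ℝ}
    (hx : x ∈ Ioo (-1 : ℝ) 1) :
    |GG n f x| ≤ (1 - x) ^ n * ∫ y in x..(1 : ℝ), |f y| := by
  rw [GG, ← intervalIntegral.integral_const_mul, ← Real.norm_eq_abs]
  apply intervalIntegral.norm_integral_le_of_norm_le hx.2.le
  · refine Filter.Eventually.of_forall fun y hy => ?_
    rw [Real.norm_eq_abs, abs_mul]
    gcongr
    rw [abs_div, abs_pow, abs_of_nonneg (sub_nonneg.2 hy.1.le), Nat.abs_cast]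
    have h1 : (1 : ℝ) ≤ (n.factorial : ℝ) := by exact_mod_cast n.factorial_pos
    have h0 : 0 ≤ y - x := by linarith [hy.1]
    calc (y - x) ^ n / (n.factorial : ℝ) ≤ (y - x) ^ n := div_le_self (by positivity) h1
      _ ≤ _ := by gcongr; exact hy.2
  · exact (int_right hf hx).abs.const_mul _

lemma hasDerivAt_rpow_one_sub (c : ℝ) {x : ℝ} (hx : x ∈ Ioo (-1 : ℝ) 1) :
    HasDerivAt (fun x : ℝ => (1 - x) ^ c) (-(c * (1 - x) ^ (c - 1))) x := by
  have h := ((hasDerivAt_id x).const_sub 1).rpow_const (p := c) (Or.inl (by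
    simp only [id]; linarith [hx.2]))
  simp only [id] at h
  convert h using 1
  ring

lemma hasDerivAt_rpow_one_add (c : ℝ) {x : ℝ} (hx : x ∈ Ioo (-1 : ℝ) 1) :
    HasDerivAt (fun x : ℝ => (1 + x) ^ c) (c * (1 + x) ^ (c - 1)) x := by
  have h := ((hasDerivAt_id x).const_add 1).rpow_const (p := c) (Or.inl (by
    simp only [id]; linarith [hx.1]))
  simp only [id] at h
  convert h using 1
  ring

lemma iter_form (c : ℝ) (i : ℕ) : ∃ a : ℕ → ℝ, ∀ (d : ℕ) (f : ℝ → ℝ),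
    IntervalIntegrable f volume (-1) 1 → ∀ x ∈ Ioo (-1 : ℝ) 1,
    iteratedDeriv i (fun x => (1 - x) ^ c * GG (i + d) f x) x =
      ∑ j ∈ Finset.range (i + 1), a j * ((1 - x) ^ (c - (j : ℝ)) * GG (d + j) f x) := by
  induction i with
  | zero => exact ⟨fun _ => 1, fun d f hf x hx => by simp⟩
  | succ i ih =>
    obtain ⟨a, ha⟩ := ih
    refine ⟨fun j => (if j < i + 1 then -(a j) else 0) +
      (if j = 0 then 0 else -((c - ((j - 1 : ℕ) : ℝ)) * a (j - 1))), fun d f hf x hx => ?_⟩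
    have hd : HasDerivAt (fun x => ∑ j ∈ Finset.range (i + 1),
        a j * ((1 - x) ^ (c - (j : ℝ)) * GG (d + 1 + j) f x))
        (∑ j ∈ Finset.range (i + 1), a j *
          (-((c - (j : ℝ)) * (1 - x) ^ (c - (j : ℝ) - 1)) * GG (d + 1 + j) f x
            + (1 - x) ^ (c - (j : ℝ)) * -(GG (d + j) f x))) x := by
      apply HasDerivAt.fun_sum
      intro j _
      apply HasDerivAt.const_mul
      have h := GG_hasDerivAt hf (d + j) x hx
      rw [show d + j + 1 = d + 1 + j by ring] at h
      exact (hasDerivAt_rpow_one_sub _ hx).mul h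
    rw [iteratedDeriv_succ]
    have hev : iteratedDeriv i (fun x => (1 - x) ^ c * GG (i + 1 + d) f x) =ᶠ[nhds x]
        (fun x => ∑ j ∈ Finset.range (i + 1),
        a j * ((1 - x) ^ (c - (j : ℝ)) * GG (d + 1 + j) f x)) := by
      filter_upwards [isOpen_Ioo.mem_nhds hx] with y hy
      have := ha (d + 1) f hf y hy
      rwa [show i + (d + 1) = i + 1 + d by ring] at this
    rw [hev.deriv_eq, hd.deriv]
    simp only [add_mul, Finset.sum_add_distrib, mul_add]
    rw [add_comm]
    congr 1
    · rw [Finset.sum_range_succ _ (i + 1)]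
      simp only [lt_irrefl, if_false, zero_mul, add_zero]
      apply Finset.sum_congr rfl
      intro j hj
      rw [if_pos (Finset.mem_range.1 hj)]
      ring
    · rw [Finset.sum_range_succ' _ (i + 1)]
      simp only [if_true, zero_mul, add_zero]
      apply Finset.sum_congr rfl
      intro j hj
      rw [if_neg (Nat.succ_ne_zero j)]
      simp only [Nat.add_sub_cancel]
      rw [show d + (j + 1) = d + 1 + j by ring]
      push_cast
      rw [show c - ((j : ℝ) + 1) = c - j - 1 by ring]
      ring

lemma deriv_bound {ψ H P F : ℝ → ℝ} {ψ' P' a x : ℝ} (hψ : HasDerivAt ψ ψ' x)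
    (hP : HasDerivAt P P' x) (hx : ψ x ≠ 0)
    (hF : F =ᶠ[nhds x] fun x => a * (ψ x * H x) + P x) :
    |deriv F x| ≤ |a| * (|ψ'| * |H x| + |ψ x| * |deriv H x|) + |P'| := by
  rw [hF.deriv_eq]
  by_cases hH : DifferentiableAt ℝ H x
  · have := ((hψ.mul hH.hasDerivAt).const_mul a).add hP
    have h2 : deriv (fun x => a * (ψ x * H x) + P x) x
      = a * (ψ' * H x + ψ x * deriv H x) + P' := this.deriv
    rw [h2]
    refine (abs_add_le _ _).trans ?_
    rw [abs_mul a]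
    gcongr
    refine (abs_add_le _ _).trans ?_
    rw [abs_mul, abs_mul]
  · by_cases ha : a = 0
    · subst ha
      have : deriv (fun x => 0 * (ψ x * H x) + P x) x = P' := by
        simp only [zero_mul, zero_add]; exact hP.deriv
      rw [this]
      simp
    · rw [deriv_zero_of_not_differentiableAt]
      · rw [abs_zero]; positivity
      · intro hd
        apply hH
        have h1 := (hd.sub hP.differentiableAt).div (hψ.differentiableAt.const_mul a)
          (mul_ne_zero ha hx)
        refine h1.congr_of_eventuallyEq ?_
        filter_upwards [hψ.continuousAt.eventually_ne hx] with y hy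
        simp only [Pi.sub_apply, Pi.div_apply]
        field_simp
        simp

lemma w_pos {α β x : ℝ} (hx : x ∈ Ioo (-1 : ℝ) 1) : 0 < w α β x := by
  have h1 : 0 < 1 - x := by linarith [hx.2]
  have h2 : 0 < 1 + x := by linarith [hx.1]
  unfold w; positivity

lemma w_continuousOn (α β : ℝ) : ContinuousOn (w α β) (Ioo (-1 : ℝ) 1) := fun x hx =>
  ((hasDerivAt_rpow_one_sub α hx).continuousAt.mul
    (hasDerivAt_rpow_one_add β hx).continuousAt).continuousWithinAt

lemma inv_w {α β x : ℝ} (hx : x ∈ Ioo (-1 : ℝ) 1) :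
    1 / w α β x = (1 - x) ^ (-α) * (1 + x) ^ (-β) := by
  have h1 : 0 < 1 - x := by linarith [hx.2]
  have h2 : 0 < 1 + x := by linarith [hx.1]
  rw [w, Real.rpow_neg h1.le, Real.rpow_neg h2.le, one_div, mul_inv]

lemma hasDerivAt_inv_w (α β : ℝ) {x : ℝ} (hx : x ∈ Ioo (-1 : ℝ) 1) :
    HasDerivAt (fun x => 1 / w α β x)
      (1 / w α β x * (α * (1 / (1 - x)) - β * (1 / (1 + x)))) x := by
  have h1 : 0 < 1 - x := by linarith [hx.2]
  have h2 : 0 < 1 + x := by linarith [hx.1]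
  have h := (hasDerivAt_rpow_one_sub (-α) hx).mul (hasDerivAt_rpow_one_add (-β) hx)
  have h3 := h.congr_of_eventuallyEq (f₁ := fun x => 1 / w α β x) (by
    filter_upwards [isOpen_Ioo.mem_nhds hx] with y hy
    exact inv_w hy)
  have e : 1 / w α β x * (α * (1 / (1 - x)) - β * (1 / (1 + x))) =
      -(-α * (1 - x) ^ (-α - 1)) * (1 + x) ^ (-β) +
        (1 - x) ^ (-α) * (-β * (1 + x) ^ (-β - 1)) := by
    rw [inv_w hx, Real.rpow_sub h1, Real.rpow_sub h2, Real.rpow_one, Real.rpow_one]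
    field_simp
    ring
  rw [e]
  exact h3

/-- The dominating function. -/
def DD (α β : ℝ) (f : ℝ → ℝ) (x : ℝ) : ℝ :=
  |deriv (GG 0 f) x| / w α β x +
    1 / w α β x * (1 / (1 - x) + |β| * (1 / (1 + x))) * ∫ y in x..(1 : ℝ), |f y|

lemma int_abs_nonneg (f : ℝ → ℝ) {x : ℝ} (hx : x ∈ Ioo (-1 : ℝ) 1) :
    0 ≤ ∫ y in x..(1 : ℝ), |f y| :=
  intervalIntegral.integral_nonneg hx.2.le (fun _ _ => abs_nonneg _)

lemma DD_nonneg (α β : ℝ) (f : ℝ → ℝ) {x : ℝ} (hx : x ∈ Ioo (-1 : ℝ) 1) : 0 ≤ DD α β f x := by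
  have h1 : 0 < 1 - x := by linarith [hx.2]
  have h2 : 0 < 1 + x := by linarith [hx.1]
  have := int_abs_nonneg f hx
  have := w_pos (α := α) (β := β) hx
  unfold DD; positivity

lemma core_bound_zero (α β : ℝ) : ∃ C : ℝ, 0 < C ∧ ∀ f : ℝ → ℝ,
    IntervalIntegrable f volume (-1) 1 → ∀ x ∈ Ioo (-1 : ℝ) 1,
    |iteratedDeriv 1 (fun x => 1 / w α β x * GG 0 f x) x| ≤ C * DD α β f x := by
  refine ⟨1 + |α|, by positivity, fun f hf x hx => ?_⟩
  have h1 : 0 < 1 - x := by linarith [hx.2]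
  have h2 : 0 < 1 + x := by linarith [hx.1]
  have hI := int_abs_nonneg f hx
  have hw := w_pos (α := α) (β := β) hx
  rw [iteratedDeriv_one]
  have := deriv_bound (a := 1) (H := GG 0 f) (hasDerivAt_inv_w α β hx)
    (hasDerivAt_const x (0 : ℝ)) (by positivity)
    (F := fun x => 1 / w α β x * GG 0 f x) (by
      filter_upwards with y; ring)
  refine this.trans ?_
  have hb := GG_bound hf 0 hx
  rw [pow_zero, one_mul] at hb
  have hA : |1 / w α β x * (α * (1 / (1 - x)) - β * (1 / (1 + x)))|
      ≤ (1 + |α|) * (1 / w α β x * (1 / (1 - x) + |β| * (1 / (1 + x)))) := by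
    rw [abs_mul, abs_of_pos (show 0 < 1 / w α β x by positivity), mul_left_comm]
    gcongr
    refine (abs_sub _ _).trans ?_
    rw [abs_mul, abs_mul, abs_of_pos (show 0 < 1 / (1 - x) by positivity),
      abs_of_pos (show 0 < 1 / (1 + x) by positivity)]
    have e1 : 0 ≤ 1 / (1 - x) := by positivity
    have e2 : 0 ≤ |α| * (|β| * (1 / (1 + x))) := by positivity
    nlinarith
  rw [abs_one, one_mul, abs_zero, add_zero, DD, mul_add, add_comm]
  refine add_le_add ?_ ?_
  · rw [abs_of_pos (show 0 < 1 / w α β x by positivity)]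
    have e2 : 0 ≤ |α| * (|deriv (GG 0 f) x| / w α β x) := by positivity
    calc _ = |deriv (GG 0 f) x| / w α β x := by ring
      _ ≤ _ := by linarith
  · calc _ ≤ ((1 + |α|) * (1 / w α β x * (1 / (1 - x) + |β| * (1 / (1 + x)))))
        * ∫ y in x..(1 : ℝ), |f y| := by gcongr
      _ = _ := by ring

lemma core_bound_beta (α : ℝ) (m : ℕ) : ∃ C : ℝ, 0 < C ∧ ∀ f : ℝ → ℝ,
    IntervalIntegrable f volume (-1) 1 → ∀ x ∈ Ioo (-1 : ℝ) 1,
    |iteratedDeriv (m + 1) (fun x => 1 / w α 0 x * GG m f x) x| ≤ C * DD α 0 f x := by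
  obtain ⟨a, ha⟩ := iter_form (-α) m
  set S := ∑ j ∈ Finset.range m, |a (j + 1)| * (|-α - ((j + 1 : ℕ) : ℝ)| + 1) with hS
  have hS0 : 0 ≤ S := Finset.sum_nonneg fun j _ => by positivity
  refine ⟨|a 0| * (|α| + 1) + S + 1, by positivity, fun f hf x hx => ?_⟩
  have h1 : 0 < 1 - x := by linarith [hx.2]
  have hI := int_abs_nonneg f hx
  set I := ∫ y in x..(1 : ℝ), |f y| with hIdef
  have hw : ∀ y ∈ Ioo (-1 : ℝ) 1, 1 / w α 0 y = (1 - y) ^ (-α) := by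
    intro y hy; rw [inv_w hy]; simp
  have hev : iteratedDeriv m (fun x => 1 / w α 0 x * GG m f x) =ᶠ[nhds x]
      fun x => a 0 * ((1 - x) ^ (-α) * GG 0 f x) + ∑ j ∈ Finset.range m,
        a (j + 1) * ((1 - x) ^ (-α - ((j + 1 : ℕ) : ℝ)) * GG (j + 1) f x) := by
    filter_upwards [isOpen_Ioo.mem_nhds hx] with y hy
    rw [iteratedDeriv_congr_open isOpen_Ioo m
      (g := fun x => (1 - x) ^ (-α) * GG (m + 0) f x)
      (fun z hz => by rw [hw z hz, add_zero]) y hy, ha 0 f hf y hy,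
      Finset.sum_range_succ']
    simp only [zero_add, Nat.cast_zero, sub_zero]
    rw [add_comm]
  have hP : HasDerivAt (fun x => ∑ j ∈ Finset.range m,
        a (j + 1) * ((1 - x) ^ (-α - ((j + 1 : ℕ) : ℝ)) * GG (j + 1) f x))
      (∑ j ∈ Finset.range m, a (j + 1) *
          (-((-α - ((j + 1 : ℕ) : ℝ)) * (1 - x) ^ (-α - ((j + 1 : ℕ) : ℝ) - 1)) * GG (j + 1) f x
            + (1 - x) ^ (-α - ((j + 1 : ℕ) : ℝ)) * -(GG j f x))) x := by
    apply HasDerivAt.fun_sum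
    intro j _
    apply HasDerivAt.const_mul
    exact (hasDerivAt_rpow_one_sub _ hx).mul (GG_hasDerivAt hf j x hx)
  have hpow : ∀ j : ℕ, (1 - x) ^ (-α - ((j + 1 : ℕ) : ℝ)) * (1 - x) ^ j
      = (1 - x) ^ (-α) * (1 / (1 - x)) := by
    intro j
    rw [Real.rpow_sub h1, Real.rpow_natCast, pow_succ]
    field_simp
  have hPb : |∑ j ∈ Finset.range m, a (j + 1) *
          (-((-α - ((j + 1 : ℕ) : ℝ)) * (1 - x) ^ (-α - ((j + 1 : ℕ) : ℝ) - 1)) * GG (j + 1) f x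
            + (1 - x) ^ (-α - ((j + 1 : ℕ) : ℝ)) * -(GG j f x))|
      ≤ S * ((1 - x) ^ (-α) * (1 / (1 - x)) * I) := by
    refine (Finset.abs_sum_le_sum_abs _ _).trans ?_
    rw [hS, Finset.sum_mul]
    apply Finset.sum_le_sum
    intro j _
    rw [abs_mul, mul_assoc]
    gcongr
    refine (abs_add_le _ _).trans ?_
    rw [add_mul, one_mul]
    refine add_le_add ?_ ?_
    · rw [abs_mul, abs_neg, abs_mul, mul_assoc]
      refine mul_le_mul_of_nonneg_left ?_ (abs_nonneg _)
      rw [abs_of_pos (Real.rpow_pos_of_pos h1 _)]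
      calc _ ≤ (1 - x) ^ (-α - ((j + 1 : ℕ) : ℝ) - 1) * ((1 - x) ^ (j + 1) * I) := by
            gcongr; exact GG_bound hf (j + 1) hx
        _ = ((1 - x) ^ (-α - ((j + 1 : ℕ) : ℝ)) * (1 - x) ^ j) * I := by
            rw [Real.rpow_sub h1 _ 1, Real.rpow_one, pow_succ]
            field_simp
        _ = _ := by rw [hpow]
    · rw [abs_mul, abs_neg, abs_of_pos (Real.rpow_pos_of_pos h1 _)]
      calc _ ≤ (1 - x) ^ (-α - ((j + 1 : ℕ) : ℝ)) * ((1 - x) ^ j * I) := by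
            gcongr; exact GG_bound hf j hx
        _ = ((1 - x) ^ (-α - ((j + 1 : ℕ) : ℝ)) * (1 - x) ^ j) * I := by ring
        _ = _ := by rw [hpow]
  rw [iteratedDeriv_succ]
  refine (deriv_bound (hasDerivAt_rpow_one_sub (-α) hx) hP
    (Real.rpow_pos_of_pos h1 _).ne' hev).trans ?_
  have hD : DD α 0 f x = (1 - x) ^ (-α) * |deriv (GG 0 f) x| +
      (1 - x) ^ (-α) * (1 / (1 - x)) * I := by
    rw [DD, ← hw x hx, ← hIdef]; simp; ring
  have hb := GG_bound hf 0 hx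
  rw [pow_zero, one_mul, ← hIdef] at hb
  rw [hD]
  have hψ : |-(-α * (1 - x) ^ (-α - 1))| = |α| * ((1 - x) ^ (-α) * (1 / (1 - x))) := by
    rw [abs_neg, abs_mul, abs_neg, Real.rpow_sub h1, Real.rpow_one,
      abs_of_pos (show 0 < (1 - x) ^ (-α) / (1 - x) by positivity)]
    ring
  rw [hψ, abs_of_pos (Real.rpow_pos_of_pos h1 _)]
  set X := (1 - x) ^ (-α) * |deriv (GG 0 f) x| with hX
  set T := (1 - x) ^ (-α) * (1 / (1 - x)) with hT
  have hX0 : 0 ≤ X := by positivity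
  have hT0 : 0 ≤ T := by positivity
  have hY0 : 0 ≤ T * I := by positivity
  have q1 : |α| * T * |GG 0 f x| ≤ |α| * (T * I) := by
    rw [mul_assoc]; gcongr
  calc _ ≤ |a 0| * (|α| * (T * I) + X) + S * (T * I) := by gcongr
    _ ≤ _ := by
      have e1 : 0 ≤ |a 0| * |α| * X := by positivity
      have e2 : 0 ≤ |a 0| * (T * I) := by positivity
      have e3 : 0 ≤ S * X := by positivity
      nlinarith

lemma u_eq (α β : ℝ) (n m k : ℕ) (h : n + 1 - k - 1 = m) (g : ℝ → ℝ) :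
    u α β (n + 1) k g = RI (-1) n
      (fun t => 1 / w α β t * GG m (fun y => g y * w α β y) t) := by
  funext x
  simp only [u, RI, GG, h, Nat.add_sub_cancel, mul_assoc]

lemma RI_not_int {n : ℕ} {v : ℝ → ℝ} (hc : ContinuousOn v (Ioo (-1 : ℝ) 1))
    (h : ¬ ∀ x ∈ Ioo (-1 : ℝ) 1, IntervalIntegrable v volume (-1) x) :
    ∀ x ∈ Ioo (-1 : ℝ) 1, RI (-1) n v x = 0 := by
  intro x hx
  apply intervalIntegral.integral_undef
  intro hi
  apply h
  have hc1 : -1 < (x - 1) / 2 := by linarith [hx.1]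
  have hc2 : (x - 1) / 2 < x := by linarith [hx.1]
  have hc3 : (x - 1) / 2 < 1 := by linarith [hx.2]
  have h1 : IntervalIntegrable (fun t => (x - t) ^ n / (n.factorial : ℝ) * v t) volume
      (-1) ((x - 1) / 2) := by
    apply hi.mono_set
    rw [uIcc_of_le hc1.le, uIcc_of_le hx.1.le]
    exact Icc_subset_Icc le_rfl hc2.le
  have h2 : IntervalIntegrable v volume (-1) ((x - 1) / 2) := by
    have hk : ContinuousOn (fun t => ((x - t) ^ n / (n.factorial : ℝ))⁻¹)
        (uIcc (-1) ((x - 1) / 2)) := by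
      apply ContinuousOn.inv₀ (by fun_prop)
      intro t ht
      rw [uIcc_of_le hc1.le] at ht
      have : 0 < x - t := by linarith [ht.2]
      positivity
    refine (h1.continuousOn_mul hk).congr ?_
    intro t ht
    rw [uIoc_of_le hc1.le] at ht
    have : 0 < x - t := by linarith [ht.2]
    have : (x - t) ^ n / (n.factorial : ℝ) ≠ 0 := by positivity
    simp only
    rw [inv_mul_cancel_left₀ this]
  intro y hy
  refine h2.trans (ContinuousOn.intervalIntegrable (hc.mono ?_))
  exact ordConnected_Ioo.uIcc_subset ⟨hc1, hc3⟩ hy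

lemma point_bound (α β : ℝ) (n k : ℕ) (hk : k ≤ n) (h : β = 0 ∨ n = 0) :
    ∃ C : ℝ, 0 < C ∧ ∀ g : ℝ → ℝ,
    IntervalIntegrable (fun y => g y * w α β y) volume (-1) 1 → ∀ x ∈ Ioo (-1 : ℝ) 1,
    |iteratedDeriv (2 * (n + 1) - k) (u α β (n + 1) k g) x|
      ≤ C * DD α β (fun y => g y * w α β y) x := by
  obtain ⟨m, rfl⟩ : ∃ m, n = m + k := ⟨n - k, by omega⟩
  have core : ∃ C : ℝ, 0 < C ∧ ∀ f : ℝ → ℝ,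
    IntervalIntegrable f volume (-1) 1 → ∀ x ∈ Ioo (-1 : ℝ) 1,
    |iteratedDeriv (m + 1) (fun x => 1 / w α β x * GG m f x) x| ≤ C * DD α β f x := by
    rcases h with rfl | h
    · exact core_bound_beta α m
    · obtain rfl : m = 0 := by omega
      exact core_bound_zero α β
  obtain ⟨C, hC, hb⟩ := core
  refine ⟨C, hC, fun g hg x hx => ?_⟩
  rw [u_eq α β (m + k) m k (by omega), show 2 * (m + k + 1) - k = (m + 1) + (m + k + 1) by omega,
    iteratedDeriv_add_comp]
  set f := fun y => g y * w α β y with hf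
  have hvc : ContinuousOn (fun t => 1 / w α β t * GG m f t) (Ioo (-1 : ℝ) 1) := by
    refine ContinuousOn.mul ?_ (GG_continuousOn hg m)
    exact fun y hy => (hasDerivAt_inv_w α β hy).continuousAt.continuousWithinAt
  by_cases hv : ∀ x ∈ Ioo (-1 : ℝ) 1,
      IntervalIntegrable (fun t => 1 / w α β t * GG m f t) volume (-1) x
  · rw [iteratedDeriv_congr_open isOpen_Ioo (m + 1)
      (RI_iteratedDeriv isOpen_Ioo hU_left (m + k) hv hvc) x hx]
    exact hb f hg x hx
  · rw [← iteratedDeriv_add_comp, iteratedDeriv_congr_open isOpen_Ioo _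
      (g := fun _ => (0 : ℝ)) (RI_not_int hvc hv) x hx]
    have : iteratedDeriv (m + 1 + (m + k + 1)) (fun _ : ℝ => (0 : ℝ)) x = 0 := by
      simp
    rw [this, abs_zero]
    exact mul_nonneg hC.le (DD_nonneg α β f hx)

lemma jac_int {a b : ℝ} (ha : -1 < a) (hb : -1 < b) :
    IntervalIntegrable (fun x : ℝ => (1 - x) ^ a * (1 + x) ^ b) volume (-1) 1 := by
  have h1 : IntervalIntegrable (fun x : ℝ => (1 - x) ^ a * (1 + x) ^ b) volume (-1) 0 := by
    have h := (intervalIntegral.intervalIntegrable_rpow' (a := 0) (b := 1) hb).comp_add_left 1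
    norm_num at h
    refine h.continuousOn_mul ?_
    rw [uIcc_of_le (by norm_num)]
    refine ContinuousOn.rpow_const (by fun_prop) fun x hx => Or.inl ?_
    linarith [hx.2]
  have h2 : IntervalIntegrable (fun x : ℝ => (1 - x) ^ a * (1 + x) ^ b) volume 0 1 := by
    have h := (intervalIntegral.intervalIntegrable_rpow' (a := 1) (b := 0) ha).comp_sub_left 1
    norm_num at h
    refine h.mul_continuousOn ?_
    rw [uIcc_of_le (by norm_num)]
    refine ContinuousOn.rpow_const (by fun_prop) fun x hx => Or.inl ?_
    linarith [hx.1]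
  exact h1.trans h2

lemma w_int {α β : ℝ} (hα : -1 < α) (hβ : -1 < β) :
    IntervalIntegrable (w α β) volume (-1) 1 := jac_int hα hβ

lemma w_nonneg {α β x : ℝ} (hx : x ∈ Icc (-1 : ℝ) 1) : 0 ≤ w α β x := by
  unfold w
  have h1 : 0 ≤ 1 - x := by linarith [hx.2]
  have h2 : 0 ≤ 1 + x := by linarith [hx.1]
  positivity

lemma w_meas (α β : ℝ) : Measurable (w α β) := by
  unfold w; fun_prop

lemma W_nonneg {α β x : ℝ} (hx : x ∈ Ioo (-1 : ℝ) 1) : 0 ≤ ∫ y in x..(1 : ℝ), w α β y :=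
  intervalIntegral.integral_nonneg hx.2.le (fun y hy => w_nonneg ⟨by linarith [hx.1, hy.1], hy.2⟩)

lemma W_bound {α β : ℝ} (hα : -1 < α) (hβ : -1 < β) : ∃ C : ℝ, 0 < C ∧
    ∀ x ∈ Ioo (-1 : ℝ) 1, ∫ y in x..(1 : ℝ), w α β y ≤ C * (1 - x) ^ (α + 1) := by
  have hI0 : 0 ≤ ∫ y in (-1 : ℝ)..1, w α β y :=
    intervalIntegral.integral_nonneg (by norm_num) (fun y hy => w_nonneg hy)
  have hα1 : 0 < α + 1 := by linarith
  have h2p : (0 : ℝ) < 2 ^ |β| := by positivity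
  refine ⟨2 ^ |β| / (α + 1) + ∫ y in (-1 : ℝ)..1, w α β y, by positivity, fun x hx => ?_⟩
  have h1 : 0 < 1 - x := by linarith [hx.2]
  have hp : 0 < (1 - x) ^ (α + 1) := by positivity
  rcases le_or_gt 0 x with h0 | h0
  · have hs : IntervalIntegrable (fun y : ℝ => (1 - y) ^ α) volume x 1 := by
      have h := (intervalIntegral.intervalIntegrable_rpow' (a := 1 - x) (b := 0) hα).comp_sub_left 1
      simpa using h
    have hle : ∫ y in x..(1 : ℝ), w α β y ≤ ∫ y in x..(1 : ℝ), 2 ^ |β| * (1 - y) ^ α := by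
      apply intervalIntegral.integral_mono_on hx.2.le (int_right (w_int hα hβ) hx)
        (hs.const_mul _)
      intro y hy
      have hy1 : 0 ≤ 1 - y := by linarith [hy.2]
      have hy2 : 1 ≤ 1 + y := by linarith [hy.1]
      rw [w, mul_comm]
      gcongr
      calc (1 + y) ^ β ≤ (1 + y) ^ |β| := Real.rpow_le_rpow_of_exponent_le hy2 (le_abs_self β)
        _ ≤ 2 ^ |β| := by
          apply Real.rpow_le_rpow (by linarith) (by linarith [hy.2]) (abs_nonneg _)
    have he : ∫ y in x..(1 : ℝ), (1 - y) ^ α = (1 - x) ^ (α + 1) / (α + 1) := by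
      rw [intervalIntegral.integral_comp_sub_left (fun y => y ^ α) 1, integral_rpow (Or.inl hα)]
      rw [sub_self, Real.zero_rpow hα1.ne', sub_zero]
    rw [intervalIntegral.integral_const_mul, he] at hle
    have : 0 ≤ (∫ y in (-1 : ℝ)..1, w α β y) * (1 - x) ^ (α + 1) := by positivity
    calc _ ≤ _ := hle
      _ = 2 ^ |β| / (α + 1) * (1 - x) ^ (α + 1) := by ring
      _ ≤ _ := by linarith
  · have hle : ∫ y in x..(1 : ℝ), w α β y ≤ ∫ y in (-1 : ℝ)..1, w α β y := by
      apply intervalIntegral.integral_mono_interval hx.1.le hx.2.le le_rfl ?_ (w_int hα hβ)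
      filter_upwards [ae_restrict_mem measurableSet_Ioc] with y hy
      exact w_nonneg ⟨hy.1.le, hy.2⟩
    have h3 : 1 ≤ (1 - x) ^ (α + 1) := Real.one_le_rpow (by linarith) hα1.le
    calc _ ≤ _ := hle
      _ ≤ (∫ y in (-1 : ℝ)..1, w α β y) * (1 - x) ^ (α + 1) := le_mul_of_one_le_right hI0 h3
      _ ≤ _ := by
        have : 0 ≤ 2 ^ |β| / (α + 1) * (1 - x) ^ (α + 1) := by positivity
        linarith

lemma ker_bound (α β e : ℝ) (he : (β = 0 ∧ e = 1 / 2) ∨ e = -(1 / 2) - β) :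
    ∃ C : ℝ, 0 < C ∧ ∀ x ∈ Ioo (-1 : ℝ) 1,
      Real.sqrt (1 - x ^ 2) * (1 / w α β x * (1 / (1 - x) + |β| * (1 / (1 + x))))
        ≤ C * ((1 - x) ^ (-(1 / 2) - α) * (1 + x) ^ e) := by
  refine ⟨2 * (1 + |β|), by positivity, fun x hx => ?_⟩
  have h1 : 0 < 1 - x := by linarith [hx.2]
  have h2 : 0 < 1 + x := by linarith [hx.1]
  have hs : Real.sqrt (1 - x ^ 2) = (1 - x) ^ (1 / 2 : ℝ) * (1 + x) ^ (1 / 2 : ℝ) := by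
    rw [show 1 - x ^ 2 = (1 - x) * (1 + x) by ring, Real.sqrt_eq_rpow,
      Real.mul_rpow h1.le h2.le]
  rw [hs, inv_w hx]
  have e1 : (1 - x) ^ (-(1 / 2) - α) = (1 - x) ^ (1 / 2 : ℝ) * (1 - x) ^ (-α) * (1 / (1 - x)) := by
    rw [← Real.rpow_add h1, one_div (1 - x), ← Real.rpow_neg_one, ← Real.rpow_add h1]
    congr 1; ring
  rcases he with ⟨rfl, rfl⟩ | rfl
  · rw [e1]
    have : 0 ≤ (1 - x) ^ (1 / 2 : ℝ) * (1 - x) ^ (-α) * (1 / (1 - x)) * (1 + x) ^ (1 / 2 : ℝ) := by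
      positivity
    simp only [abs_zero, neg_zero, Real.rpow_zero]
    nlinarith
  · have e2 : (1 + x) ^ (-(1 / 2) - β)
        = (1 + x) ^ (1 / 2 : ℝ) * (1 + x) ^ (-β) * (1 / (1 + x)) := by
      rw [← Real.rpow_add h2, one_div (1 + x), ← Real.rpow_neg_one, ← Real.rpow_add h2]
      congr 1; ring
    rw [e1, e2]
    have e3 : 1 / (1 - x) + |β| * (1 / (1 + x)) ≤
        2 * (1 + |β|) * (1 / (1 - x) * (1 / (1 + x))) := by
      have : 1 / (1 - x) + |β| * (1 / (1 + x)) =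
        ((1 + x) + |β| * (1 - x)) * (1 / (1 - x) * (1 / (1 + x))) := by
        field_simp
      rw [this]
      gcongr
      nlinarith [abs_nonneg β, hx.1, hx.2]
    calc _ ≤ (1 - x) ^ (1 / 2 : ℝ) * (1 + x) ^ (1 / 2 : ℝ) *
        ((1 - x) ^ (-α) * (1 + x) ^ (-β) * (2 * (1 + |β|) * (1 / (1 - x) * (1 / (1 + x))))) := by
          gcongr
      _ = _ := by ring

/-- combined pointwise bound -/
lemma full_bound {α β : ℝ} (hα : -1 < α) (hβ : -1 < β) (n k : ℕ) (hk : k ≤ n)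
    (h : β = 0 ∨ n = 0) (e θ : ℝ) (he : (β = 0 ∧ e = 1 / 2) ∨ e = -(1 / 2) - β) (hθ : 0 ≤ θ) :
    ∃ C : ℝ, 0 < C ∧ ∀ (g : ℝ → ℝ) (N : ℝ), 0 ≤ N →
    IntervalIntegrable (fun y => g y * w α β y) volume (-1) 1 →
    (∀ x ∈ Ioo (-1 : ℝ) 1, ∫ y in x..(1 : ℝ), |g y * w α β y|
      ≤ (∫ y in x..(1 : ℝ), w α β y) ^ θ * N) →
    ∀ x ∈ Ioo (-1 : ℝ) 1,
    |Real.sqrt (1 - x ^ 2) ^ (n + 1 - k) *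
        iteratedDeriv (2 * (n + 1) - k) (u α β (n + 1) k g) x|
      ≤ C * (|deriv (GG 0 (fun y => g y * w α β y)) x| / w α β x +
          (1 - x) ^ (-(1 / 2) - α + (α + 1) * θ) * (1 + x) ^ e * N) := by
  obtain ⟨C0, hC0, hp⟩ := point_bound α β n k hk h
  obtain ⟨C1, hC1, hker⟩ := ker_bound α β e he
  obtain ⟨C2, hC2, hW⟩ := W_bound hα hβ
  refine ⟨C0 * (1 + C1 * C2 ^ θ), by positivity, fun g N hN hg hI x hx => ?_⟩
  have h1 : 0 < 1 - x := by linarith [hx.2]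
  have h2 : 0 < 1 + x := by linarith [hx.1]
  have hw := w_pos (α := α) (β := β) hx
  set φ := Real.sqrt (1 - x ^ 2) with hφ
  have hφ0 : 0 ≤ φ := Real.sqrt_nonneg _
  have hφ1 : φ ≤ 1 := by
    rw [hφ]; apply Real.sqrt_le_one.2; nlinarith [sq_nonneg x]
  have hφn : φ ^ (n + 1 - k) ≤ φ := pow_le_of_le_one hφ0 hφ1 (by omega)
  set f := fun y => g y * w α β y with hf
  set h := |deriv (GG 0 f) x| / w α β x with hh
  have hh0 : 0 ≤ h := by positivity
  set κ := 1 / w α β x * (1 / (1 - x) + |β| * (1 / (1 + x))) with hκ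
  have hκ0 : 0 ≤ κ := by positivity
  have hI0 := int_abs_nonneg f hx
  set R := (1 - x) ^ (-(1 / 2) - α + (α + 1) * θ) * (1 + x) ^ e * N with hR
  have hR0 : 0 ≤ R := by positivity
  have hWx := hW x hx
  have hW0 := W_nonneg (α := α) (β := β) hx
  have key : φ * κ * (∫ y in x..(1 : ℝ), |f y|) ≤ C1 * C2 ^ θ * R := by
    calc _ ≤ C1 * ((1 - x) ^ (-(1 / 2) - α) * (1 + x) ^ e) *
        ((C2 * (1 - x) ^ (α + 1)) ^ θ * N) := by
          refine mul_le_mul (hker x hx) ((hI x hx).trans ?_) hI0 (by positivity)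
          gcongr
      _ = _ := by
        rw [Real.mul_rpow hC2.le (by positivity), ← Real.rpow_mul h1.le, hR, Real.rpow_add h1]
        ring
  rw [abs_mul, abs_of_nonneg (by positivity)]
  calc _ ≤ φ * (C0 * DD α β f x) := by
        gcongr
        exact hp g hg x hx
    _ = C0 * (φ * h + φ * κ * (∫ y in x..(1 : ℝ), |f y|)) := by
        rw [DD, ← hh, ← hκ]; ring
    _ ≤ C0 * (1 * h + C1 * C2 ^ θ * R) := by gcongr
    _ ≤ _ := by
      rw [mul_assoc C0]
      gcongr
      have : 0 ≤ C1 * C2 ^ θ * h := by positivity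
      nlinarith

lemma GG_zero_eq (f : ℝ → ℝ) : GG 0 f = fun x => -∫ t in (1 : ℝ)..x, f t := by
  funext x
  rw [GG_eq, RI_zero]; simp

lemma GG_zero_deriv {f : ℝ → ℝ} (hf : IntervalIntegrable f volume (-1) 1) :
    ∀ᵐ x, x ∈ Ioo (-1 : ℝ) 1 → deriv (GG 0 f) x = -f x := by
  filter_upwards [hf.ae_hasDerivAt_integral] with x hx hx'
  have := hx (by rw [uIcc_of_le (by norm_num)]; exact Ioo_subset_Icc_self hx') 1 right_mem_uIcc
  rw [GG_zero_eq]
  exact this.neg.deriv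

lemma GG_zero_lip {α β : ℝ} {g : ℝ → ℝ} {M : ℝ} (hM : 0 ≤ M)
    (hf : IntervalIntegrable (fun y => g y * w α β y) volume (-1) 1)
    (hg : ∀ x ∈ Icc (-1 : ℝ) 1, |g x| ≤ M) {x : ℝ} (hx : x ∈ Ioo (-1 : ℝ) 1) :
    |deriv (GG 0 (fun y => g y * w α β y)) x| ≤ M * w α β x := by
  have hw := w_pos (α := α) (β := β) hx
  have step : ∀ ε > 0, |deriv (GG 0 (fun y => g y * w α β y)) x| ≤ M * (w α β x + ε) := by
    intro ε hε
    rw [← Real.norm_eq_abs]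
    apply norm_deriv_le_of_lip' (by positivity)
    have hev : ∀ᶠ y in nhds x, y ∈ Ioo (-1 : ℝ) 1 ∧ w α β y < w α β x + ε :=
      Filter.Eventually.and (isOpen_Ioo.mem_nhds hx)
        (((w_continuousOn α β).continuousAt (isOpen_Ioo.mem_nhds hx)).eventually_lt
          continuousAt_const (by linarith))
    obtain ⟨δ, hδ, hb⟩ := Metric.eventually_nhds_iff_ball.1 hev
    filter_upwards [Metric.ball_mem_nhds x hδ] with y hy
    have hyU := (hb y hy).1
    rw [GG_zero_eq]
    have e : (-∫ t in (1 : ℝ)..y, g t * w α β t) - (-∫ t in (1 : ℝ)..x, g t * w α β t)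
        = ∫ t in y..x, g t * w α β t := by
      have := intervalIntegral.integral_interval_sub_left (int_right hf hx).symm
        (int_right hf hyU).symm
      linarith
    simp only
    rw [e, norm_sub_rev]
    apply intervalIntegral.norm_integral_le_of_norm_le_const
    intro t ht
    have htb : t ∈ Metric.ball x δ := by
      rw [Real.ball_eq_Ioo] at hy ⊢
      exact ordConnected_Ioo.uIcc_subset hy ⟨by linarith, by linarith⟩ (uIoc_subset_uIcc ht)
    obtain ⟨htU, htw⟩ := hb t htb
    have hwt := w_pos (α := α) (β := β) htU
    rw [Real.norm_eq_abs, abs_mul, abs_of_pos hwt]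
    have := hg t (Ioo_subset_Icc_self htU)
    gcongr
  have hlim : Filter.Tendsto (fun ε => M * (w α β x + ε)) (nhdsWithin 0 (Ioi 0))
      (nhds (M * (w α β x + 0))) := by
    apply Filter.Tendsto.mono_left _ nhdsWithin_le_nhds
    exact Continuous.tendsto (by fun_prop) 0
  rw [add_zero] at hlim
  apply ge_of_tendsto hlim
  filter_upwards [self_mem_nhdsWithin] with ε hε using step ε hε

lemma holder_bound {α β Q : ℝ} (hα : -1 < α) (hβ : -1 < β) (hQ : 1 ≤ Q) {g : ℝ → ℝ}
    (hg : Measurable g)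
    (hgi : IntegrableOn (fun x => |g x| ^ Q * w α β x) (Ioo (-1 : ℝ) 1)) {x : ℝ}
    (hx : x ∈ Ioo (-1 : ℝ) 1) :
    ∫ y in x..(1 : ℝ), |g y * w α β y| ≤ (∫ y in x..(1 : ℝ), w α β y) ^ (1 - 1 / Q) *
      (∫ x in Ioo (-1 : ℝ) 1, |g x| ^ Q * w α β x) ^ (1 / Q) := by
  have hsub : Ioo x 1 ⊆ Ioo (-1 : ℝ) 1 := Ioo_subset_Ioo hx.1.le le_rfl
  have hA : ∫ y in Ioo x 1, |g y| ^ Q * w α β y ≤ ∫ x in Ioo (-1 : ℝ) 1, |g x| ^ Q * w α β x := by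
    apply setIntegral_mono_set hgi
    · filter_upwards [ae_restrict_mem measurableSet_Ioo] with y hy
      have := w_pos (α := α) (β := β) hy
      simp only [Pi.zero_apply]; positivity
    · exact hsub.eventuallyLE
  have hA0 : 0 ≤ ∫ y in Ioo x 1, |g y| ^ Q * w α β y := by
    apply setIntegral_nonneg measurableSet_Ioo
    intro y hy
    have := w_pos (α := α) (β := β) (hsub hy)
    positivity
  have hQ0 : 0 < Q := by linarith
  rw [intervalIntegral.integral_of_le hx.2.le, intervalIntegral.integral_of_le hx.2.le,
    integral_Ioc_eq_integral_Ioo, integral_Ioc_eq_integral_Ioo]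
  rcases hQ.eq_or_lt with rfl | hQ1
  · simp only [Real.rpow_one, div_one, sub_self, Real.rpow_zero, one_mul] at *
    refine le_trans (le_of_eq ?_) hA
    apply setIntegral_congr_fun measurableSet_Ioo
    intro y hy
    simp only [abs_mul, abs_of_pos (w_pos (α := α) (β := β) (hsub hy))]
  · have hc : Q.HolderConjugate (Real.conjExponent Q) := Real.HolderConjugate.conjExponent hQ1
    set P := Real.conjExponent Q with hP
    have hP0 : 0 < P := hc.symm.pos
    have hPQ : 1 / P = 1 - 1 / Q := by
      have := hc.inv_add_inv_eq_one
      simp only [one_div]; linarith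
    have hwi : IntegrableOn (w α β) (Ioo x 1) := by
      have := int_right (w_int hα hβ) hx
      rw [intervalIntegrable_iff_integrableOn_Ioo_of_le hx.2.le] at this
      exact this
    have m1 : MemLp (fun y => |g y| * w α β y ^ (1 / Q)) (ENNReal.ofReal Q)
        (volume.restrict (Ioo x 1)) := by
      rw [← integrable_norm_rpow_iff]
      · rw [ENNReal.toReal_ofReal hQ0.le]
        refine (hgi.mono_set hsub).congr ?_
        filter_upwards [ae_restrict_mem measurableSet_Ioo] with y hy
        have := w_pos (α := α) (β := β) (hsub hy)
        rw [Real.norm_of_nonneg (by positivity), Real.mul_rpow (abs_nonneg _) (by positivity),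
          ← Real.rpow_mul this.le, one_div_mul_cancel hQ0.ne', Real.rpow_one]
      · have := w_meas α β
        exact Measurable.aestronglyMeasurable (by fun_prop)
      · simpa using hQ0
      · simp
    have m2 : MemLp (fun y => w α β y ^ (1 / P)) (ENNReal.ofReal P)
        (volume.restrict (Ioo x 1)) := by
      rw [← integrable_norm_rpow_iff]
      · rw [ENNReal.toReal_ofReal hP0.le]
        refine hwi.congr ?_
        filter_upwards [ae_restrict_mem measurableSet_Ioo] with y hy
        have := w_pos (α := α) (β := β) (hsub hy)
        rw [Real.norm_of_nonneg (by positivity),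
          ← Real.rpow_mul this.le, one_div_mul_cancel hP0.ne', Real.rpow_one]
      · have := w_meas α β
        exact Measurable.aestronglyMeasurable (by fun_prop)
      · simpa using hP0
      · simp
    have key := integral_mul_le_Lp_mul_Lq_of_nonneg hc (by
        filter_upwards [ae_restrict_mem measurableSet_Ioo] with y hy
        have := w_pos (α := α) (β := β) (hsub hy)
        simp only [Pi.zero_apply]; positivity) (by
        filter_upwards [ae_restrict_mem measurableSet_Ioo] with y hy
        have := w_pos (α := α) (β := β) (hsub hy)
        simp only [Pi.zero_apply]; positivity) m1 m2
    have k1 : ∫ y in Ioo x 1, |g y * w α β y| =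
        ∫ y in Ioo x 1, |g y| * w α β y ^ (1 / Q) * w α β y ^ (1 / P) := by
      apply setIntegral_congr_fun measurableSet_Ioo
      intro y hy
      have := w_pos (α := α) (β := β) (hsub hy)
      simp only
      rw [abs_mul, abs_of_pos this, mul_assoc, ← Real.rpow_add this, hPQ, add_sub_cancel,
        Real.rpow_one]
    have k2 : ∫ y in Ioo x 1, (|g y| * w α β y ^ (1 / Q)) ^ Q =
        ∫ y in Ioo x 1, |g y| ^ Q * w α β y := by
      apply setIntegral_congr_fun measurableSet_Ioo
      intro y hy
      have := w_pos (α := α) (β := β) (hsub hy)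
      simp only
      rw [Real.mul_rpow (abs_nonneg _) (by positivity),
          ← Real.rpow_mul this.le, one_div_mul_cancel hQ0.ne', Real.rpow_one]
    have k3 : ∫ y in Ioo x 1, (w α β y ^ (1 / P)) ^ P = ∫ y in Ioo x 1, w α β y := by
      apply setIntegral_congr_fun measurableSet_Ioo
      intro y hy
      have := w_pos (α := α) (β := β) (hsub hy)
      simp only
      rw [← Real.rpow_mul this.le, one_div_mul_cancel hP0.ne', Real.rpow_one]
    rw [k2, k3] at key
    rw [k1, ← hPQ, mul_comm (_ ^ (1 / P))]
    refine key.trans ?_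
    have hW0 : 0 ≤ ∫ y in Ioo x 1, w α β y :=
      setIntegral_nonneg measurableSet_Ioo fun y hy => (w_pos (hsub hy)).le
    gcongr

lemma f_int {α β Q : ℝ} (hα : -1 < α) (hβ : -1 < β) (hQ : 1 ≤ Q) {g : ℝ → ℝ}
    (hg : Measurable g)
    (hgi : IntegrableOn (fun x => |g x| ^ Q * w α β x) (Ioo (-1 : ℝ) 1)) :
    IntervalIntegrable (fun y => g y * w α β y) volume (-1) 1 := by
  have hwi := w_int hα hβ
  rw [intervalIntegrable_iff_integrableOn_Ioo_of_le (by norm_num)] at hwi ⊢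
  have hm := w_meas α β
  refine Integrable.mono' (hwi.add hgi) (Measurable.aestronglyMeasurable (by fun_prop)) ?_
  filter_upwards [ae_restrict_mem measurableSet_Ioo] with y hy
  have hw := w_pos (α := α) (β := β) hy
  simp only [Pi.add_apply]
  rw [Real.norm_eq_abs, abs_mul, abs_of_pos hw, ← one_add_mul]
  gcongr
  rcases le_or_gt 1 |g y| with h | h
  · have := Real.rpow_le_rpow_of_exponent_le h hQ
    rw [Real.rpow_one] at this; linarith
  · have : 0 ≤ |g y| ^ Q := by positivity
    linarith

lemma main_top {α β : ℝ} (hα : -1 < α) (hβ : -1 < β) (n k : ℕ) (hk : k ≤ n)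
    (h : β = 0 ∨ n = 0) (e : ℝ) (he : (β = 0 ∧ e = 1 / 2) ∨ e = -(1 / 2) - β) (he0 : 0 ≤ e) :
    ∃ c : ℝ, 0 < c ∧ ∀ g : ℝ → ℝ, Measurable g →
      BddAbove ((fun x => |g x|) '' Icc (-1 : ℝ) 1) →
      LpW α β ⊤ (fun x => Real.sqrt (1 - x ^ 2) ^ (n + 1 - k) *
          iteratedDeriv (2 * (n + 1) - k) (u α β (n + 1) k g) x)
        ≤ c * LpW α β ⊤ g := by
  obtain ⟨C, hC, hb⟩ := full_bound hα hβ n k hk h e 1 he zero_le_one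
  refine ⟨C * (1 + 2 ^ (1 / 2 : ℝ) * 2 ^ e), by positivity, fun g hg hbd => ?_⟩
  simp only [LpW, if_true]
  set M := sSup ((fun x => |g x|) '' Icc (-1 : ℝ) 1) with hM
  have hgM : ∀ x ∈ Icc (-1 : ℝ) 1, |g x| ≤ M := fun x hx => le_csSup hbd ⟨x, hx, rfl⟩
  have hM0 : 0 ≤ M := (abs_nonneg _).trans (hgM 0 (by norm_num))
  have hwi := w_int hα hβ
  have hfi : IntervalIntegrable (fun y => g y * w α β y) volume (-1) 1 := by
    have hwi' := hwi.const_mul M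
    rw [intervalIntegrable_iff_integrableOn_Ioo_of_le (by norm_num)] at hwi' ⊢
    have hm := w_meas α β
    refine Integrable.mono' hwi' (Measurable.aestronglyMeasurable (by fun_prop)) ?_
    filter_upwards [ae_restrict_mem measurableSet_Ioo] with y hy
    have hw := w_pos (α := α) (β := β) hy
    rw [Real.norm_eq_abs, abs_mul, abs_of_pos hw]
    gcongr
    exact hgM y (Ioo_subset_Icc_self hy)
  have hI : ∀ x ∈ Ioo (-1 : ℝ) 1, ∫ y in x..(1 : ℝ), |g y * w α β y|
      ≤ (∫ y in x..(1 : ℝ), w α β y) ^ (1 : ℝ) * M := by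
    intro x hx
    rw [Real.rpow_one, ← intervalIntegral.integral_mul_const]
    apply intervalIntegral.integral_mono_on hx.2.le (int_right hfi hx).abs
      ((int_right hwi hx).mul_const _)
    intro y hy
    have hy' : y ∈ Icc (-1 : ℝ) 1 := ⟨by linarith [hx.1, hy.1], hy.2⟩
    have hw := w_nonneg (α := α) (β := β) hy'
    rw [abs_mul, abs_of_nonneg hw, mul_comm]
    gcongr
    exact hgM y hy'
  apply csSup_le ((nonempty_Icc.2 (by norm_num)).image _)
  rintro _ ⟨x, hx, rfl⟩
  by_cases hxU : x ∈ Ioo (-1 : ℝ) 1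
  · refine (hb g M hM0 hfi hI x hxU).trans ?_
    have hw := w_pos (α := α) (β := β) hxU
    have h1 : 0 < 1 - x := by linarith [hxU.2]
    have h2 : 0 < 1 + x := by linarith [hxU.1]
    have hl : |deriv (GG 0 (fun y => g y * w α β y)) x| / w α β x ≤ M := by
      rw [div_le_iff₀ hw]; exact GG_zero_lip hM0 hfi hgM hxU
    have e1 : -(1 / 2) - α + (α + 1) * 1 = 1 / 2 := by ring
    rw [e1, mul_assoc C, add_mul, one_mul]
    have p1 : (1 - x) ^ (1 / 2 : ℝ) ≤ 2 ^ (1 / 2 : ℝ) :=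
      Real.rpow_le_rpow h1.le (by linarith [hxU.1]) (by norm_num)
    have p2 : (1 + x) ^ e ≤ 2 ^ e :=
      Real.rpow_le_rpow h2.le (by linarith [hxU.2]) he0
    gcongr
  · have hz : 1 - x ^ 2 = 0 := by
      have : x = -1 ∨ x = 1 := by
        by_contra hcon
        push Not at hcon
        exact hxU ⟨lt_of_le_of_ne hx.1 (Ne.symm hcon.1), lt_of_le_of_ne hx.2 hcon.2⟩
      rcases this with rfl | rfl <;> norm_num
    beta_reduce
    rw [hz, Real.sqrt_zero, zero_pow (by omega), zero_mul, abs_zero]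
    positivity

lemma main_fin {α β : ℝ} (hα : -1 < α) (hβ : -1 < β) (n k : ℕ) (hk : k ≤ n)
    (h : β = 0 ∨ n = 0) (e : ℝ) (he : (β = 0 ∧ e = 1 / 2) ∨ e = -(1 / 2) - β)
    (q : ℝ≥0∞) (hq1 : 1 ≤ q) (hq : q ≠ ⊤) (he0 : -1 < e * q.toReal + β) :
    ∃ c : ℝ, 0 < c ∧ ∀ g : ℝ → ℝ, Measurable g →
      IntegrableOn (fun x => |g x| ^ q.toReal * w α β x) (Ioo (-1 : ℝ) 1) →
      LpW α β q (fun x => Real.sqrt (1 - x ^ 2) ^ (n + 1 - k) *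
          iteratedDeriv (2 * (n + 1) - k) (u α β (n + 1) k g) x)
        ≤ c * LpW α β q g := by
  have hQ : 1 ≤ q.toReal := by
    have := ENNReal.toReal_mono hq hq1
    simpa using this
  simp only [LpW, if_neg hq]
  set Q := q.toReal with hQdef
  have hQ0 : 0 < Q := by linarith
  have hθ : 0 ≤ 1 - 1 / Q := by
    rw [sub_nonneg, div_le_one hQ0]; exact hQ
  obtain ⟨C, hC, hb⟩ := full_bound hα hβ n k hk h e (1 - 1 / Q) he hθ
  have hj := jac_int (a := Q / 2 - 1) (b := e * Q + β) (by linarith) he0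
  rw [intervalIntegrable_iff_integrableOn_Ioo_of_le (by norm_num)] at hj
  set J := ∫ x in Ioo (-1 : ℝ) 1, (1 - x) ^ (Q / 2 - 1) * (1 + x) ^ (e * Q + β) with hJ
  have hJ0 : 0 ≤ J := by
    apply setIntegral_nonneg measurableSet_Ioo
    intro x hx
    have h1 : 0 < 1 - x := by linarith [hx.2]
    have h2 : 0 < 1 + x := by linarith [hx.1]
    positivity
  set K := (2 * C) ^ Q * (1 + J) with hK
  have hK0 : 0 < K := by positivity
  refine ⟨K ^ (1 / Q), by positivity, fun g hg hgi => ?_⟩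
  set A := ∫ x in Ioo (-1 : ℝ) 1, |g x| ^ Q * w α β x with hA
  have hA0 : 0 ≤ A := by
    apply setIntegral_nonneg measurableSet_Ioo
    intro x hx
    have := w_pos (α := α) (β := β) hx
    positivity
  have hfi := f_int hα hβ hQ hg hgi
  have hb' := hb g (A ^ (1 / Q)) (by positivity) hfi
    (fun x hx => holder_bound hα hβ hQ hg hgi hx)
  rw [← Real.mul_rpow hK0.le hA0]
  apply Real.rpow_le_rpow _ _ (by positivity)
  · apply setIntegral_nonneg measurableSet_Ioo
    intro x hx
    have := w_pos (α := α) (β := β) hx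
    positivity
  have hInt0 : IntegrableOn (fun x => (2 * C) ^ Q * (|g x| ^ Q * w α β x +
      A * ((1 - x) ^ (Q / 2 - 1) * (1 + x) ^ (e * Q + β)))) (Ioo (-1 : ℝ) 1) :=
    (hgi.add (hj.const_mul A)).const_mul _
  have hval : ∫ x in Ioo (-1 : ℝ) 1, (2 * C) ^ Q * (|g x| ^ Q * w α β x +
      A * ((1 - x) ^ (Q / 2 - 1) * (1 + x) ^ (e * Q + β))) = K * A := by
    rw [integral_const_mul, integral_add hgi (hj.const_mul A), integral_const_mul, ← hA, ← hJ, hK]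
    ring
  rw [← hval]
  apply integral_mono_of_nonneg
  · filter_upwards [ae_restrict_mem measurableSet_Ioo] with x hx
    have := w_pos (α := α) (β := β) hx
    simp only [Pi.zero_apply]; positivity
  · exact hInt0
  have hd := ae_restrict_of_ae (s := Ioo (-1 : ℝ) 1) (GG_zero_deriv hfi)
  filter_upwards [ae_restrict_mem measurableSet_Ioo, hd] with x hx hdx
  have hw := w_pos (α := α) (β := β) hx
  have h1 : 0 < 1 - x := by linarith [hx.2]
  have h2 : 0 < 1 + x := by linarith [hx.1]
  have hbx := hb' x hx
  rw [hdx hx, abs_neg, abs_mul (g x) (w α β x), abs_of_pos hw, mul_div_cancel_right₀ _ hw.ne'] at hbx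
  set R := (1 - x) ^ (-(1 / 2) - α + (α + 1) * (1 - 1 / Q)) * (1 + x) ^ e * A ^ (1 / Q) with hR
  have hR0 : 0 ≤ R := by positivity
  have hRQ : R ^ Q * w α β x = A * ((1 - x) ^ (Q / 2 - 1) * (1 + x) ^ (e * Q + β)) := by
    rw [hR, Real.mul_rpow (by positivity) (by positivity),
      Real.mul_rpow (by positivity) (by positivity), ← Real.rpow_mul h1.le, ← Real.rpow_mul h2.le,
      ← Real.rpow_mul hA0, one_div_mul_cancel hQ0.ne', Real.rpow_one, w, Real.rpow_add h2,
      show Q / 2 - 1 = (-(1 / 2) - α + (α + 1) * (1 - 1 / Q)) * Q + α by field_simp; ring,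
      Real.rpow_add h1]
    ring
  have hsum : (|g x| + R) ^ Q ≤ 2 ^ Q * (|g x| ^ Q + R ^ Q) := by
    have hg0 : 0 ≤ |g x| ^ Q := by positivity
    have hRp : 0 ≤ R ^ Q := by positivity
    have h2Q : (0 : ℝ) ≤ 2 ^ Q := by positivity
    rcases le_total |g x| R with hle | hle
    · calc (|g x| + R) ^ Q ≤ (2 * R) ^ Q := by
            apply Real.rpow_le_rpow (by positivity) (by linarith) hQ0.le
        _ = 2 ^ Q * R ^ Q := Real.mul_rpow (by norm_num) hR0
        _ ≤ _ := by gcongr; linarith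
    · calc (|g x| + R) ^ Q ≤ (2 * |g x|) ^ Q := by
            apply Real.rpow_le_rpow (by positivity) (by linarith) hQ0.le
        _ = 2 ^ Q * |g x| ^ Q := Real.mul_rpow (by norm_num) (abs_nonneg _)
        _ ≤ _ := by gcongr; linarith
  rw [← hRQ]
  calc _ ≤ (C * (|g x| + R)) ^ Q * w α β x := by gcongr
    _ = C ^ Q * (|g x| + R) ^ Q * w α β x := by
      rw [Real.mul_rpow hC.le (by positivity)]
    _ ≤ C ^ Q * (2 ^ Q * (|g x| ^ Q + R ^ Q)) * w α β x := by gcongr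
    _ = _ := by
      rw [Real.mul_rpow (by norm_num) hC.le]; ring

theorem statement18 (α β : ℝ) (hα : -1 < α) (hβ : -1 < β)
    (s k : ℕ) (hs : 1 ≤ s) (hk : k ≤ s - 1)
    (p q : ℝ≥0∞) (hq : 1 ≤ q) (hpq : 1 / p + 1 / q = 1)
    (hcond : β = 0 ∨ (s = 1 ∧ (q ≠ ⊤ → p ≠ ⊤ → β < p.toReal / 2 - 1)
      ∧ (q = ⊤ → β ≤ -(1 / 2)))) :
    ∃ c : ℝ, 0 < c ∧ ∀ g : ℝ → ℝ, Measurable g →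
      (q ≠ ⊤ → IntegrableOn (fun x => |g x| ^ q.toReal * w α β x) (Ioo (-1 : ℝ) 1)) →
      (q = ⊤ → BddAbove ((fun x => |g x|) '' Icc (-1 : ℝ) 1)) →
      LpW α β q (fun x =>
          Real.sqrt (1 - x ^ 2) ^ (s - k) * iteratedDeriv (2 * s - k) (u α β s k g) x)
        ≤ c * LpW α β q g := by
  obtain ⟨n, rfl⟩ : ∃ n, s = n + 1 := ⟨s - 1, by omega⟩
  have hkn : k ≤ n := by omega
  have hn : β = 0 ∨ n = 0 := by
    rcases hcond with h | h
    · exact Or.inl h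
    · right; omega
  by_cases hqt : q = ⊤
  · obtain ⟨e, he, he0⟩ : ∃ e : ℝ, ((β = 0 ∧ e = 1 / 2) ∨ e = -(1 / 2) - β) ∧ 0 ≤ e := by
      rcases hcond with h | ⟨_, _, h⟩
      · exact ⟨1 / 2, Or.inl ⟨h, rfl⟩, by norm_num⟩
      · exact ⟨-(1 / 2) - β, Or.inr rfl, by linarith [h hqt]⟩
    obtain ⟨c, hc, hm⟩ := main_top hα hβ n k hkn hn e he he0
    refine ⟨c, hc, fun g hg _ hb => ?_⟩
    subst hqt
    exact hm g hg (hb rfl)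
  · have hQ : 1 ≤ q.toReal := by
      have := ENNReal.toReal_mono hqt hq
      simpa using this
    obtain ⟨e, he, he0⟩ : ∃ e : ℝ, ((β = 0 ∧ e = 1 / 2) ∨ e = -(1 / 2) - β) ∧
        -1 < e * q.toReal + β := by
      rcases hcond with h | ⟨_, h, _⟩
      · exact ⟨1 / 2, Or.inl ⟨h, rfl⟩, by rw [h]; linarith⟩
      · refine ⟨-(1 / 2) - β, Or.inr rfl, ?_⟩
        by_cases hpt : p = ⊤
        · have hq1 : q = 1 := by
            rw [hpt] at hpq
            simpa using hpq
          rw [hq1]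
          simp only [ENNReal.toReal_one]
          linarith
        · have hlt := h hqt hpt
          have hp0 : p ≠ 0 := by
            rintro rfl
            simp at hpq
          have hq0 : q ≠ 0 := by
            rintro rfl
            simp at hpq
          have hpp : 0 < p.toReal := ENNReal.toReal_pos hp0 hpt
          have hqq : 0 < q.toReal := ENNReal.toReal_pos hq0 hqt
          have hr : 1 / p.toReal + 1 / q.toReal = 1 := by
            have := congrArg ENNReal.toReal hpq
            rw [ENNReal.toReal_add (by simpa using hp0) (by simpa using hq0)] at this
            simpa using this
          have hr2 : q.toReal + p.toReal = p.toReal * q.toReal := by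
            field_simp at hr
            linarith
          have hq1 : 0 < q.toReal - 1 := by
            have : p.toReal * (q.toReal - 1) = q.toReal := by linarith
            by_contra hcon
            push Not at hcon
            nlinarith
          have := mul_lt_mul_of_pos_right hlt hq1
          nlinarith
    obtain ⟨c, hc, hm⟩ := main_fin hα hβ n k hkn hn e he q hq hqt he0
    exact ⟨c, hc, fun g hg hgi _ => hm g hg (hgi hqt)⟩

end JacobiApprox
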